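/- Let (Ω, F, P) be a probability space with a filtration (F_τ)_{τ≥0}, and let z_0, …, z_{E-1} : Ω → ℝ^d (E ≥ 1) be random vectors such that each z_τ is F_{τ+1}-measurable, the conditional expectation E[z_τ | F_τ] = 0 almost surely, and E[exp(‖z_τ‖²) | F_τ] ≤ 2 almost surely, for all τ ∈ {0, …, E-1}. Then the normalized sum z := (1/(2√E))·∑_{τ=0}^{E-1} z_τ satisfies E[z | F_0] = 0 almost surely and the sub-Gaussian tail bound E[exp(‖z‖²) | F_0] ≤ 2 almost surely; equivalently, E[exp(‖∑_{τ=0}^{E-1} z_τ‖²/(4E)) | F_0] ≤ 2 almost surely. -/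

import Mathlib

open MeasureTheory
open scoped BigOperators

theorem aux_exp_le (t : ℝ) : Real.exp t ≤ t + Real.exp (t ^ 2) := by
  have h2 := Real.add_one_le_exp (t ^ 2)
  rcases le_or_gt |t| 1 with h | h
  · have h1 := (abs_le.1 (Real.abs_exp_sub_one_sub_id_le h)).2
    linarith
  · rcases lt_abs.1 h with h | h
    · have : Real.exp t ≤ Real.exp (t ^ 2) := Real.exp_le_exp.2 (by nlinarith)
      linarith
    · have : Real.exp t ≤ 1 := Real.exp_le_one_iff.2 (by linarith)
      nlinarith

/-- weighted Young inequality for exponentials -/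
theorem aux_young (r u v : ℝ) (h0 : 0 ≤ r) (h1 : r ≤ 1) :
    Real.exp ((1 - r) * u + r * v) ≤ (1 - r) * Real.exp u + r * Real.exp v := by
  have := convexOn_exp.2 (Set.mem_univ u) (Set.mem_univ v)
    (by linarith : 0 ≤ 1 - r) h0 (by ring)
  simpa using this

theorem aux_young0 (r v : ℝ) (h0 : 0 ≤ r) (h1 : r ≤ 1) :
    Real.exp (r * (v - Real.log 2)) ≤ 1 + r * (Real.exp v / 2 - 1) := by
  have := aux_young r 0 (v - Real.log 2) h0 h1
  rw [Real.exp_sub, Real.exp_log (by norm_num)] at this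
  simp only [mul_zero, zero_add, Real.exp_zero] at this
  linarith

/-- one-vector deterministic bound -/
theorem aux_vec {V : Type*} [NormedAddCommGroup V] [InnerProductSpace ℝ V] (y z : V) :
    Real.exp (inner ℝ y z - 17 / 20 * ‖y‖ ^ 2) ≤
      1 + (if ‖y‖ ≤ 1 then Real.exp (-(17 / 20 * ‖y‖ ^ 2)) else 0) * inner ℝ y z
        + (if ‖y‖ ≤ 1 then ‖y‖ ^ 2 else 1 / 2) * (Real.exp (‖z‖ ^ 2) / 2 - 1) := by
  have hL : Real.log 2 < 7 / 10 := by linarith [Real.log_two_lt_d9]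
  have hin := abs_real_inner_le_norm y z
  split_ifs with h
  · set r := ‖y‖ ^ 2 with hr
    have hr0 : 0 ≤ r := by positivity
    have hr1 : r ≤ 1 := by rw [hr]; nlinarith [norm_nonneg y]
    have h1 := aux_exp_le (inner ℝ y z)
    have h2 : (inner ℝ y z) ^ 2 ≤ r * ‖z‖ ^ 2 := by
      rw [hr, ← mul_pow, ← sq_abs]
      gcongr
    have h3 := aux_young0 r (‖z‖ ^ 2) hr0 hr1
    have h4 : Real.exp (-(17 / 20 * r)) * Real.exp ((inner ℝ y z) ^ 2)
        ≤ Real.exp (r * (‖z‖ ^ 2 - Real.log 2)) := by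
      rw [← Real.exp_add]
      apply Real.exp_le_exp.2
      nlinarith
    have h5 : Real.exp (inner ℝ y z - 17 / 20 * r)
        = Real.exp (-(17 / 20 * r)) * Real.exp (inner ℝ y z) := by
      rw [← Real.exp_add]; ring_nf
    rw [h5]
    have h6 := mul_le_mul_of_nonneg_left h1 (Real.exp_pos (-(17 / 20 * r))).le
    linarith
  · have h3 := aux_young0 (1 / 2) (‖z‖ ^ 2) (by norm_num) (by norm_num)
    refine le_trans (Real.exp_le_exp.2 ?_) (h3.trans (by linarith))
    have := le_trans (le_abs_self _) hin
    push Not at h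
    nlinarith [sq_nonneg (‖y‖ - ‖z‖)]

theorem aux_det {V : Type*} [NormedAddCommGroup V] [InnerProductSpace ℝ V]
    [MeasurableSpace V] [BorelSpace V] [SecondCountableTopology V]
    (a : ℝ) (ha0 : 0 < a) (ha1 : 17 / 5 * a < 1) :
    ∃ (w : V → V) (g : V → ℝ), Measurable w ∧ Measurable g ∧ (∀ x, ‖w x‖ ≤ 1) ∧
      (∀ x, 0 ≤ g x) ∧ (∀ x, g x ≤ 1) ∧ ∀ x z : V,
      Real.exp (a * ‖x + z‖ ^ 2) ≤ Real.exp (a * Real.log 2) *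
        (Real.exp (a / (1 - 17 / 5 * a) * ‖x‖ ^ 2) *
          (1 + inner ℝ (w x) z + g x * (Real.exp (‖z‖ ^ 2) / 2 - 1))) := by
  have hb : 0 < 1 - a := by linarith
  let y : V → V := fun x => (2 * a / (1 - a)) • x
  have hy : Measurable y := measurable_const_smul _
  have hset : MeasurableSet {x : V | ‖y x‖ ≤ 1} := measurableSet_le hy.norm measurable_const
  refine ⟨fun x => ((1 - a) * (if ‖y x‖ ≤ 1 then Real.exp (-(17 / 20 * ‖y x‖ ^ 2)) else 0)) • y x,
    fun x => (1 - a) * (if ‖y x‖ ≤ 1 then ‖y x‖ ^ 2 else 1 / 2) + a, ?_, ?_, ?_, ?_, ?_, ?_⟩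
  · refine Measurable.smul (Measurable.mul measurable_const (Measurable.ite hset ?_ ?_)) hy
    · fun_prop
    · fun_prop
  · refine Measurable.add (Measurable.mul measurable_const (Measurable.ite hset ?_ ?_)) ?_ <;>
      fun_prop
  · intro x
    simp only
    split_ifs with h
    · rw [norm_smul, Real.norm_of_nonneg (by positivity)]
      have : Real.exp (-(17 / 20 * ‖y x‖ ^ 2)) ≤ 1 := Real.exp_le_one_iff.2 (by
        have : 0 ≤ ‖y x‖ ^ 2 := by positivity
        linarith)
      have h2 : (1 - a) * Real.exp (-(17 / 20 * ‖y x‖ ^ 2)) ≤ 1 :=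
        mul_le_one₀ (by linarith) (Real.exp_pos _).le this
      exact mul_le_one₀ h2 (norm_nonneg _) h
    · simp
  · intro x
    simp only
    split_ifs <;> positivity
  · intro x
    simp only
    split_ifs with h
    · have : ‖y x‖ ^ 2 ≤ 1 := by nlinarith [norm_nonneg (y x)]
      nlinarith
    · linarith
  · intro x z
    beta_reduce
    have h1 := aux_vec (y x) z
    set I := (if ‖y x‖ ≤ 1 then Real.exp (-(17 / 20 * ‖y x‖ ^ 2)) else 0)
    set G := (if ‖y x‖ ≤ 1 then ‖y x‖ ^ 2 else 1 / 2)
    have hinner : inner ℝ (y x) z = 2 * a / (1 - a) * inner ℝ x z := by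
      simp [y, inner_smul_left]
    have hny : ‖y x‖ ^ 2 = (2 * a / (1 - a)) ^ 2 * ‖x‖ ^ 2 := by
      simp only [y]; rw [norm_smul, mul_pow, Real.norm_eq_abs, sq_abs]
    have h2 := aux_young a (inner ℝ (y x) z - 17 / 20 * ‖y x‖ ^ 2) (‖z‖ ^ 2 - Real.log 2)
      ha0.le (by linarith)
    rw [Real.exp_sub (‖z‖ ^ 2), Real.exp_log (by norm_num)] at h2
    have h3 : a * ‖x + z‖ ^ 2 ≤ a * Real.log 2 + (a / (1 - 17 / 5 * a) * ‖x‖ ^ 2 +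
        ((1 - a) * (inner ℝ (y x) z - 17 / 20 * ‖y x‖ ^ 2) + a * (‖z‖ ^ 2 - Real.log 2))) := by
      rw [norm_add_sq_real, hinner, hny]
      have e1 : (1 - a) * (2 * a / (1 - a) * inner ℝ x z
          - 17 / 20 * ((2 * a / (1 - a)) ^ 2 * ‖x‖ ^ 2))
          = 2 * a * inner ℝ x z - 17 / 5 * a ^ 2 / (1 - a) * ‖x‖ ^ 2 := by
        field_simp
        ring
      rw [e1]
      have e2 : a + 17 / 5 * a ^ 2 / (1 - a) ≤ a / (1 - 17 / 5 * a) := by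
        have hc : 0 < 1 - 17 / 5 * a := by linarith
        have e3 : a / (1 - 17 / 5 * a) = a + 17 / 5 * a ^ 2 / (1 - 17 / 5 * a) := by
          rw [div_eq_iff hc.ne', add_mul, div_mul_cancel₀ _ hc.ne']
          ring
        rw [e3]
        gcongr
        linarith
      have := mul_le_mul_of_nonneg_right e2 (sq_nonneg ‖x‖)
      linarith
    refine (Real.exp_le_exp.2 h3).trans ?_
    rw [Real.exp_add, Real.exp_add]
    gcongr
    refine h2.trans ?_
    have h4 := mul_le_mul_of_nonneg_left h1 hb.le
    rw [real_inner_smul_left (y x)]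
    linarith

theorem aux_step_bdd {Ω : Type*} {m m0 : MeasurableSpace Ω} (P : Measure Ω)
    [IsProbabilityMeasure P] (hm : m ≤ m0) {d : ℕ}
    (S Z : Ω → EuclideanSpace ℝ (Fin d)) (hS : StronglyMeasurable[m] S)
    (hZ : Integrable Z P) (hZ2 : Integrable (fun ω => Real.exp (‖Z ω‖ ^ 2)) P)
    (hZ0 : P[Z|m] =ᵐ[P] 0)
    (hZs : ∀ᵐ ω ∂P, (P[fun ω' => Real.exp (‖Z ω'‖ ^ 2)|m]) ω ≤ 2)
    (a : ℝ) (ha0 : 0 < a) (ha1 : 17 / 5 * a < 1) (T : Set Ω) (hT : MeasurableSet[m] T)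
    (n : ℝ) (hn : ∀ ω ∈ T, ‖S ω‖ ≤ n) :
    ∫⁻ ω in T, ENNReal.ofReal (Real.exp (a * ‖S ω + Z ω‖ ^ 2)) ∂P ≤
      ENNReal.ofReal (Real.exp (a * Real.log 2)) *
      ∫⁻ ω in T, ENNReal.ofReal (Real.exp (a / (1 - 17 / 5 * a) * ‖S ω‖ ^ 2)) ∂P := by
  obtain ⟨w, g, hw, hg, hw1, hg0, hg1, hdet⟩ :=
    aux_det (V := EuclideanSpace ℝ (Fin d)) a ha0 ha1
  set a' := a / (1 - 17 / 5 * a) with ha'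
  have ha'0 : 0 < a' := div_pos ha0 (by linarith)
  set X : Ω → ℝ := T.indicator (fun ω => Real.exp (a' * ‖S ω‖ ^ 2)) with hX
  set C := Real.exp (a' * n ^ 2) with hC
  have hSm : Measurable[m] S := hS.measurable
  have hX0 : ∀ ω, 0 ≤ X ω := fun ω => Set.indicator_nonneg (fun _ _ => (Real.exp_pos _).le) ω
  have hXC : ∀ ω, X ω ≤ C := by
    intro ω
    by_cases h : ω ∈ T
    · simp only [hX, Set.indicator_of_mem h, hC]
      have := hn ω h
      gcongr
    · simp only [hX, Set.indicator_of_notMem h, hC]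
      positivity
  have hXm : Measurable[m] X := by
    refine Measurable.indicator ?_ hT
    have h : Measurable (fun v : EuclideanSpace ℝ (Fin d) => Real.exp (a' * ‖v‖ ^ 2)) := by
      fun_prop
    exact h.comp hSm
  have hwS : Measurable[m] (fun ω => w (S ω)) := hw.comp hSm
  have hgS : Measurable[m] (fun ω => g (S ω)) := hg.comp hSm
  have hWm : Measurable[m] (fun ω => X ω • w (S ω)) := hXm.smul hwS
  have hGm : Measurable[m] (fun ω => X ω * g (S ω)) := hXm.mul hgS
  have hW : StronglyMeasurable[m] (fun ω => X ω • w (S ω)) := hWm.stronglyMeasurable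
  have hG : StronglyMeasurable[m] (fun ω => X ω * g (S ω)) := hGm.stronglyMeasurable
  have hWb : ∀ ω, ‖X ω • w (S ω)‖ ≤ C := by
    intro ω
    rw [norm_smul, Real.norm_of_nonneg (hX0 ω)]
    calc X ω * ‖w (S ω)‖ ≤ X ω * 1 := by
          have := hw1 (S ω); have := hX0 ω; gcongr
      _ ≤ C := by simpa using hXC ω
  have hGb : ∀ ω, ‖X ω * g (S ω)‖ ≤ C := by
    intro ω
    rw [norm_mul, Real.norm_of_nonneg (hX0 ω), Real.norm_of_nonneg (hg0 _)]
    calc X ω * g (S ω) ≤ X ω * 1 := by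
          have := hg1 (S ω); have := hX0 ω; gcongr
      _ ≤ C := by simpa using hXC ω
  have hXint : Integrable X P := Integrable.of_bound
    (hXm.stronglyMeasurable.mono hm).aestronglyMeasurable C
    (ae_of_all _ fun ω => by rw [Real.norm_of_nonneg (hX0 ω)]; exact hXC ω)
  -- linear term
  have hlin_int : Integrable (fun ω => inner ℝ (X ω • w (S ω)) (Z ω)) P := by
    refine (hZ.norm.const_mul C).mono'
      ((hW.mono hm).aestronglyMeasurable.inner hZ.aestronglyMeasurable) (ae_of_all _ fun ω => ?_)
    refine (norm_inner_le_norm _ _).trans ?_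
    exact mul_le_mul_of_nonneg_right (hWb ω) (norm_nonneg _)
  have hlin : ∫ ω, inner ℝ (X ω • w (S ω)) (Z ω) ∂P = 0 := by
    rw [← integral_condExp hm]
    have h : P[fun ω => inner ℝ (X ω • w (S ω)) (Z ω)|m] =ᵐ[P]
        fun ω => inner ℝ (X ω • w (S ω)) ((P[Z|m]) ω) :=
      condExp_stronglyMeasurable_bilin_of_bound (μ := P) (innerSL ℝ) hm hW hZ C
        (ae_of_all _ hWb)
    rw [integral_congr_ae h]
    rw [integral_congr_ae (g := fun _ => (0 : ℝ))]
    · simp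
    · filter_upwards [hZ0] with ω hω
      simp [hω]
  -- exponential term
  set e : Ω → ℝ := fun ω => Real.exp (‖Z ω‖ ^ 2) with he
  have hexp_int : Integrable (fun ω => (X ω * g (S ω)) * e ω) P :=
    hZ2.bdd_mul (hG.mono hm).aestronglyMeasurable (ae_of_all _ hGb)
  have hGint : Integrable (fun ω => X ω * g (S ω)) P := Integrable.of_bound
    (hG.mono hm).aestronglyMeasurable C (ae_of_all _ hGb)
  have hexp : ∫ ω, (X ω * g (S ω)) * e ω ∂P ≤ 2 * ∫ ω, X ω * g (S ω) ∂P := by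
    rw [← integral_condExp hm, ← integral_const_mul]
    have h := condExp_mul_of_stronglyMeasurable_left hG hexp_int hZ2
    refine integral_mono_ae integrable_condExp (hGint.const_mul 2) ?_
    filter_upwards [h, hZs] with ω h1 h2
    have h3 : 0 ≤ X ω * g (S ω) := mul_nonneg (hX0 ω) (hg0 _)
    have h4 := mul_le_mul_of_nonneg_left h2 h3
    refine (le_of_eq h1).trans ?_
    simp only [Pi.mul_apply]
    linarith
  set U : Ω → ℝ := fun ω => X ω + inner ℝ (X ω • w (S ω)) (Z ω) +
    ((1 / 2) * ((X ω * g (S ω)) * e ω) - X ω * g (S ω)) with hU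
  have hUint : Integrable U P :=
    (hXint.add hlin_int).add ((hexp_int.const_mul (1 / 2)).sub hGint)
  have hUle : ∫ ω, U ω ∂P ≤ ∫ ω, X ω ∂P := by
    have : ∫ ω, U ω ∂P = (∫ ω, X ω ∂P + ∫ ω, inner ℝ (X ω • w (S ω)) (Z ω) ∂P) +
        ((1 / 2) * ∫ ω, (X ω * g (S ω)) * e ω ∂P - ∫ ω, X ω * g (S ω) ∂P) := by
      have i1 : Integrable (fun ω => X ω + inner ℝ (X ω • w (S ω)) (Z ω)) P :=
        hXint.add hlin_int
      have i2 : Integrable (fun ω => (1 / 2) * ((X ω * g (S ω)) * e ω) - X ω * g (S ω)) P :=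
        (hexp_int.const_mul (1 / 2)).sub hGint
      simp only [hU]
      rw [integral_add i1 i2, integral_add hXint hlin_int, integral_sub (hexp_int.const_mul (1 / 2)) hGint,
        integral_const_mul]
    rw [this, hlin]
    linarith
  have hUT : ∀ ω ∈ T, Real.exp (a * ‖S ω + Z ω‖ ^ 2) ≤ Real.exp (a * Real.log 2) * U ω := by
    intro ω h
    have h1 := hdet (S ω) (Z ω)
    have hXω : X ω = Real.exp (a' * ‖S ω‖ ^ 2) := by simp [hX, h]
    rw [← hXω] at h1
    refine h1.trans (le_of_eq ?_)
    simp only [hU, he, inner_smul_left, conj_trivial]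
    ring
  have hU0 : ∀ ω, 0 ≤ U ω := by
    intro ω
    by_cases h : ω ∈ T
    · have h1 := (Real.exp_pos _).trans_le (hUT ω h)
      exact (pos_of_mul_pos_right h1 (Real.exp_pos _).le).le
    · have hXω : X ω = 0 := by simp [hX, h]
      simp [hU, hXω]
  have hTm0 : MeasurableSet T := hm _ hT
  calc ∫⁻ ω in T, ENNReal.ofReal (Real.exp (a * ‖S ω + Z ω‖ ^ 2)) ∂P
      ≤ ∫⁻ ω in T, ENNReal.ofReal (Real.exp (a * Real.log 2) * U ω) ∂P :=
        setLIntegral_mono' hTm0 fun ω h => ENNReal.ofReal_le_ofReal (hUT ω h)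
    _ ≤ ∫⁻ ω, ENNReal.ofReal (Real.exp (a * Real.log 2) * U ω) ∂P := setLIntegral_le_lintegral _ _
    _ = ENNReal.ofReal (∫ ω, Real.exp (a * Real.log 2) * U ω ∂P) := by
        rw [ofReal_integral_eq_lintegral_ofReal (hUint.const_mul _)
          (ae_of_all _ fun ω => mul_nonneg (Real.exp_pos _).le (hU0 ω))]
    _ ≤ ENNReal.ofReal (Real.exp (a * Real.log 2) * ∫ ω, X ω ∂P) := by
        rw [integral_const_mul]
        gcongr
    _ = _ := by
        rw [ENNReal.ofReal_mul (Real.exp_pos _).le,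
          ofReal_integral_eq_lintegral_ofReal hXint (ae_of_all _ hX0),
          ← lintegral_indicator hTm0]
        congr 2
        funext ω
        by_cases h : ω ∈ T <;> simp [hX, h]

theorem aux_step {Ω : Type*} {m m0 : MeasurableSpace Ω} (P : Measure Ω)
    [IsProbabilityMeasure P] (hm : m ≤ m0) {d : ℕ}
    (S Z : Ω → EuclideanSpace ℝ (Fin d)) (hS : StronglyMeasurable[m] S)
    (hZ : Integrable Z P) (hZ2 : Integrable (fun ω => Real.exp (‖Z ω‖ ^ 2)) P)
    (hZ0 : P[Z|m] =ᵐ[P] 0)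
    (hZs : ∀ᵐ ω ∂P, (P[fun ω' => Real.exp (‖Z ω'‖ ^ 2)|m]) ω ≤ 2)
    (a : ℝ) (ha0 : 0 < a) (ha1 : 17 / 5 * a < 1) (T : Set Ω) (hT : MeasurableSet[m] T) :
    ∫⁻ ω in T, ENNReal.ofReal (Real.exp (a * ‖S ω + Z ω‖ ^ 2)) ∂P ≤
      ENNReal.ofReal (Real.exp (a * Real.log 2)) *
      ∫⁻ ω in T, ENNReal.ofReal (Real.exp (a / (1 - 17 / 5 * a) * ‖S ω‖ ^ 2)) ∂P := by
  let B : ℕ → Set Ω := fun n => T ∩ (fun ω => ⌊‖S ω‖⌋₊) ⁻¹' {n}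
  have hfl : Measurable[m] (fun ω => ⌊‖S ω‖⌋₊) := Nat.measurable_floor.comp (measurable_norm.comp hS.measurable)
  have hB : ∀ n, MeasurableSet[m] (B n) := fun n =>
    hT.inter (hfl (measurableSet_singleton n))
  have hU : T = ⋃ n, B n := by
    ext ω; simp [B]
  have hd : Pairwise (Function.onFun Disjoint B) := by
    intro i j hij
    refine Set.disjoint_left.2 fun ω h1 h2 => hij ?_
    exact h1.2.symm.trans h2.2
  rw [hU, lintegral_iUnion (fun n => hm _ (hB n)) hd, lintegral_iUnion (fun n => hm _ (hB n)) hd,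
    ← ENNReal.tsum_mul_left]
  refine ENNReal.tsum_le_tsum fun n => ?_
  refine aux_step_bdd P hm S Z hS hZ hZ2 hZ0 hZs a ha0 ha1 (B n) (hB n) (n + 1) fun ω h => ?_
  have h2 : ⌊‖S ω‖⌋₊ = n := h.2
  rw [← h2]
  exact (Nat.lt_floor_add_one _).le

theorem aux_sum (E : ℕ) (hE : 1 ≤ E) :
    ∑ j ∈ Finset.range E, 1 / (3 / 5 * (E : ℝ) + 17 / 5 * ((j : ℝ) + 1)) ≤ 1 := by
  have hE' : (1 : ℝ) ≤ E := by exact_mod_cast hE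
  have h1 : ∀ j ∈ Finset.range E, 1 / (3 / 5 * (E : ℝ) + 17 / 5 * ((j : ℝ) + 1)) ≤
      (5 / 3 * E - 17 / 12 * ((j : ℝ) + 1)) / (E : ℝ) ^ 2 := by
    intro j hj
    have hj' : (j : ℝ) + 1 ≤ E := by exact_mod_cast Finset.mem_range.1 hj
    have hj0 : (0 : ℝ) ≤ j := by positivity
    rw [div_le_div_iff₀ (by positivity) (by positivity)]
    nlinarith [mul_nonneg (sub_nonneg.2 hj') (by linarith : (0 : ℝ) ≤ (j : ℝ) + 1)]
  have h2 : ∀ n : ℕ, ∑ j ∈ Finset.range n, (5 / 3 * (E : ℝ) - 17 / 12 * ((j : ℝ) + 1))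
      = 5 / 3 * E * n - 17 / 24 * n * (n + 1) := by
    intro n
    induction n with
    | zero => simp
    | succ k ih => rw [Finset.sum_range_succ, ih]; push_cast; ring
  refine (Finset.sum_le_sum h1).trans ?_
  rw [← Finset.sum_div, h2, div_le_one (by positivity)]
  nlinarith

theorem average_subgaussian_random_vectors
    {Ω : Type*} {m0 : MeasurableSpace Ω} (P : Measure Ω) [IsProbabilityMeasure P]
    (ℱ : Filtration ℕ m0) (d E : ℕ) (hE : 1 ≤ E)
    (z : ℕ → Ω → EuclideanSpace ℝ (Fin d))
    (hmeas : ∀ τ < E, StronglyMeasurable[ℱ (τ + 1)] (z τ))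
    (hint : ∀ τ < E, Integrable (z τ) P)
    (hint2 : ∀ τ < E, Integrable (fun ω => Real.exp (‖z τ ω‖ ^ 2)) P)
    (hmart : ∀ τ < E, P[z τ|ℱ τ] =ᵐ[P] 0)
    (hsub : ∀ τ < E, ∀ᵐ ω ∂P,
      (P[fun ω' => Real.exp (‖z τ ω'‖ ^ 2)|ℱ τ]) ω ≤ 2) :
    (P[fun ω => (1 / (2 * Real.sqrt E)) • ∑ τ ∈ Finset.range E, z τ ω|ℱ 0]
        =ᵐ[P] 0) ∧
      ∀ᵐ ω ∂P,
        (P[fun ω' =>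
            Real.exp (‖(1 / (2 * Real.sqrt E)) • ∑ τ ∈ Finset.range E, z τ ω'‖ ^ 2)|ℱ 0]) ω
          ≤ 2 := by
  have hE' : (1 : ℝ) ≤ E := by exact_mod_cast hE
  constructor
  · have hz0 : ∀ τ ∈ Finset.range E, P[z τ|ℱ 0] =ᵐ[P] 0 := by
      intro τ hτ
      have hτ' := Finset.mem_range.1 hτ
      have h1 := condExp_condExp_of_le (μ := P) (f := z τ) (ℱ.mono (Nat.zero_le τ)) (ℱ.le τ)
      have h2 : P[P[z τ|ℱ τ]|ℱ 0] =ᵐ[P] P[(0 : Ω → EuclideanSpace ℝ (Fin d))|ℱ 0] :=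
        condExp_congr_ae (hmart τ hτ')
      rw [condExp_zero] at h2
      exact h1.symm.trans h2
    have h1 : P[∑ τ ∈ Finset.range E, z τ|ℱ 0] =ᵐ[P] 0 := by
      refine (condExp_finsetSum (fun τ hτ => hint τ (Finset.mem_range.1 hτ)) (ℱ 0)).trans ?_
      refine (eventuallyEq_sum hz0).trans ?_
      simp
    have h2 := condExp_smul (μ := P) (1 / (2 * Real.sqrt E)) (∑ τ ∈ Finset.range E, z τ) (ℱ 0)
    have h3 : (fun ω => (1 / (2 * Real.sqrt E)) • ∑ τ ∈ Finset.range E, z τ ω)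
        = (1 / (2 * Real.sqrt E)) • ∑ τ ∈ Finset.range E, z τ := by
      ext1 ω; simp
    rw [h3]
    filter_upwards [h1, h2] with ω a b
    rw [b, Pi.smul_apply, a]
    simp
  · let S : ℕ → Ω → EuclideanSpace ℝ (Fin d) := fun k ω => ∑ τ ∈ Finset.range k, z τ ω
    let A : ℕ → ℝ := fun k => 1 / (3 / 5 * (E : ℝ) + 17 / 5 * (k : ℝ))
    have hS : ∀ k ≤ E, StronglyMeasurable[ℱ k] (S k) := by
      intro k hk
      refine Finset.stronglyMeasurable_fun_sum _ fun τ hτ => ?_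
      have := Finset.mem_range.1 hτ
      exact (hmeas τ (by omega)).mono (ℱ.mono (by omega))
    have key : ∀ k ≤ E, ∀ T, MeasurableSet[ℱ 0] T →
        ∫⁻ ω in T, ENNReal.ofReal (Real.exp (A k * ‖S k ω‖ ^ 2)) ∂P ≤
          ENNReal.ofReal (Real.exp ((∑ j ∈ Finset.range k, A (j + 1)) * Real.log 2)) * P T := by
      intro k
      induction k with
      | zero => intro _ T hT; simp [S]
      | succ k ih =>
        intro hk T hT
        have hk0 : (0 : ℝ) ≤ k := by positivity
        have hd : 0 < 3 / 5 * (E : ℝ) + 17 / 5 * ((k : ℝ) + 1) := by linarith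
        have hd' : 0 < 3 / 5 * (E : ℝ) + 17 / 5 * (k : ℝ) := by linarith
        have hA : A (k + 1) = 1 / (3 / 5 * (E : ℝ) + 17 / 5 * ((k : ℝ) + 1)) := by
          simp [A]
        have ha1 : 17 / 5 * A (k + 1) < 1 := by
          rw [hA, mul_one_div, div_lt_one hd]; linarith
        have hAA : A (k + 1) / (1 - 17 / 5 * A (k + 1)) = A k := by
          rw [div_eq_iff (by linarith), hA]
          simp only [A]
          field_simp
          ring
        have h1 := aux_step P (ℱ.le k) (S k) (z k) (hS k (by omega)) (hint k (by omega))
          (hint2 k (by omega)) (hmart k (by omega)) (hsub k (by omega)) (A (k + 1))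
          (by rw [hA]; positivity) ha1 T (ℱ.mono (Nat.zero_le k) _ hT)
        rw [hAA] at h1
        have h2 : ∀ ω, S (k + 1) ω = S k ω + z k ω := fun ω => Finset.sum_range_succ _ _
        simp only [h2]
        refine h1.trans ?_
        refine (mul_le_mul_right (ih (by omega) T hT) _).trans (le_of_eq ?_)
        rw [← mul_assoc, ← ENNReal.ofReal_mul (Real.exp_pos _).le, ← Real.exp_add,
          Finset.sum_range_succ]
        congr 3
        ring
    have hfun : (fun ω' =>
        Real.exp (‖(1 / (2 * Real.sqrt E)) • ∑ τ ∈ Finset.range E, z τ ω'‖ ^ 2)) =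
        fun ω => Real.exp (A E * ‖S E ω‖ ^ 2) := by
      funext ω
      simp only [S]
      rw [norm_smul, mul_pow, Real.norm_eq_abs, sq_abs, div_pow, mul_pow,
        Real.sq_sqrt (by linarith)]
      congr 2
      simp only [A]
      congr 1 <;> ring
    rw [hfun]
    set f : Ω → ℝ := fun ω => Real.exp (A E * ‖S E ω‖ ^ 2) with hf
    have hf0 : ∀ ω, 0 ≤ f ω := fun ω => (Real.exp_pos _).le
    have hfm : AEStronglyMeasurable f P := by
      have h1 : StronglyMeasurable (S E) := (hS E le_rfl).mono (ℱ.le E)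
      have h2 : Continuous (fun v : EuclideanSpace ℝ (Fin d) => Real.exp (A E * ‖v‖ ^ 2)) := by
        fun_prop
      exact (h2.comp_stronglyMeasurable h1).aestronglyMeasurable
    have hsum : ∑ j ∈ Finset.range E, A (j + 1) ≤ 1 := by
      refine le_trans (le_of_eq ?_) (aux_sum E hE)
      simp [A]
    have hbd : ∀ T, MeasurableSet[ℱ 0] T →
        ∫⁻ ω in T, ENNReal.ofReal (f ω) ∂P ≤ ENNReal.ofReal 2 * P T := by
      intro T hT
      refine (key E le_rfl T hT).trans ?_
      gcongr
      calc _ ≤ Real.exp (1 * Real.log 2) := by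
            apply Real.exp_le_exp.2
            exact mul_le_mul_of_nonneg_right hsum (Real.log_nonneg (by norm_num))
        _ = 2 := by rw [one_mul, Real.exp_log (by norm_num)]
    have hfi : Integrable f P := by
      refine ⟨hfm, ?_⟩
      rw [hasFiniteIntegral_iff_ofReal (ae_of_all _ hf0)]
      have := hbd Set.univ MeasurableSet.univ
      rw [Measure.restrict_univ] at this
      refine this.trans_lt ?_
      simp
    refine ae_of_ae_trim (ℱ.le 0) ?_
    refine ae_le_of_forall_setIntegral_le
      (integrable_condExp.trim (ℱ.le 0) stronglyMeasurable_condExp) (integrable_const 2) ?_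
    intro T hT _
    rw [← setIntegral_trim (ℱ.le 0) stronglyMeasurable_condExp hT,
      ← setIntegral_trim (ℱ.le 0) stronglyMeasurable_const hT,
      setIntegral_condExp (ℱ.le 0) hfi hT]
    rw [integral_eq_lintegral_of_nonneg_ae (ae_of_all _ hf0) hfm.restrict]
    refine (ENNReal.toReal_mono ?_ (hbd T hT)).trans (le_of_eq ?_)
    · exact ENNReal.mul_ne_top ENNReal.ofReal_ne_top (measure_ne_top _ _)
    · simp [ENNReal.toReal_mul, Measure.real, mul_comm]
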